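/- arXiv:2212.06802 — 6 statements merged into one kernel-verified Lean document; each statement's English description precedes it below -/
import Mathlib

section
/- For every real δ > 0 there exists a constant c > 0 such that for all integers r > s ≥ 1 and every integer k with (k − 1)·(r − s) ≥ (1 + δ)·r, one has R_{r,s}(k) ≥ exp(c·(r − s)). -/
/-- `HasSetColouringRamsey r s k n` says that every colouring assigning to each
edge of the complete graph on `n` vertices a set of `s` colours from `{1,…,r}`
contains a monochromatic clique of size `k`. -/
def HasSetColouringRamsey (r s k n : ℕ) : Prop :=
  ∀ χ : Fin n → Fin n → Finset (Fin r),
    (∀ u v, χ u v = χ v u) →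
    (∀ u v, u ≠ v → (χ u v).card = s) →
    ∃ (S : Finset (Fin n)) (i : Fin r), S.card = k ∧
      ∀ u ∈ S, ∀ v ∈ S, u ≠ v → i ∈ χ u v

/-- The set-colouring Ramsey number `R_{r,s}(k)`. -/
noncomputable def setRamsey (r s k : ℕ) : ℕ :=
  sInf {n | HasSetColouringRamsey r s k n}

/-- Multicolour Ramsey theorem for symmetric relations covering all pairs. -/
theorem ramsey_aux (r : ℕ) (hr : 0 < r) : ∀ (t : ℕ) (k : Fin r → ℕ), (∑ i, k i) = t →
    ∃ n : ℕ, ∀ (α : Type) [DecidableEq α] (P : Fin r → α → α → Prop),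
      (∀ i u v, P i u v → P i v u) → (∀ u v, u ≠ v → ∃ i, P i u v) →
      ∀ V : Finset α, n ≤ V.card → ∃ (S : Finset α) (i : Fin r), S ⊆ V ∧ S.card = k i ∧
        ∀ u ∈ S, ∀ v ∈ S, u ≠ v → P i u v := by
  classical
  intro t
  induction t with
  | zero =>
    intro k hk
    refine ⟨0, fun α _ P _ _ V _ => ⟨∅, ⟨0, hr⟩, by simp, ?_, by simp⟩⟩
    have := (Finset.sum_eq_zero_iff.1 hk) ⟨0, hr⟩ (Finset.mem_univ _)
    simp [this]
  | succ t ih =>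
    intro k hk
    by_cases h0 : ∃ i, k i = 0
    · obtain ⟨i, hi⟩ := h0
      exact ⟨0, fun α _ P _ _ V _ => ⟨∅, i, by simp, by simp [hi], by simp⟩⟩
    · push Not at h0
      have key : ∀ i, ∑ j, Function.update k i (k i - 1) j = t := by
        intro i
        have h1 := Finset.sum_update_of_mem (Finset.mem_univ i) k (k i - 1)
        have h2 := Finset.add_sum_erase Finset.univ k (Finset.mem_univ i)
        rw [← Finset.sdiff_singleton_eq_erase] at h2
        have := h0 i
        omega
      choose N hN using fun i => ih (Function.update k i (k i - 1)) (key i)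
      refine ⟨1 + ∑ i, N i, fun α _ P hs hc V hV => ?_⟩
      have hne : V.Nonempty := by
        rw [← Finset.card_pos]; omega
      obtain ⟨v, hv⟩ := hne
      have hsub : V.erase v ⊆ Finset.univ.biUnion (fun i => (V.erase v).filter (fun u => P i v u)) := by
        intro u hu
        obtain ⟨i, hi⟩ := hc v u (Finset.ne_of_mem_erase hu).symm
        simp only [Finset.mem_biUnion, Finset.mem_univ, true_and, Finset.mem_filter]
        exact ⟨i, hu, hi⟩
      have hcard := (Finset.card_le_card hsub).trans Finset.card_biUnion_le
      have hex : ∃ i, N i ≤ ((V.erase v).filter (fun u => P i v u)).card := by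
        by_contra hcon
        push Not at hcon
        have h1 : ∑ i, ((V.erase v).filter (fun u => P i v u)).card < ∑ i, N i :=
          Finset.sum_lt_sum_of_nonempty ⟨⟨0, hr⟩, Finset.mem_univ _⟩ (fun i _ => hcon i)
        rw [Finset.card_erase_of_mem hv] at hcard
        omega
      obtain ⟨i, hi⟩ := hex
      obtain ⟨S, j, hSV, hSc, hSP⟩ := hN i α P hs hc _ hi
      by_cases hij : j = i
      · subst hij
        have hvS : v ∉ S := fun h => by simpa using hSV h
        refine ⟨insert v S, j, ?_, ?_, ?_⟩
        · intro u hu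
          rcases Finset.mem_insert.1 hu with rfl | hu
          · exact hv
          · exact Finset.mem_of_mem_erase (Finset.mem_filter.1 (hSV hu)).1
        · rw [Finset.card_insert_of_notMem hvS, hSc, Function.update_self]
          have := h0 j
          omega
        · intro a ha b hb hab
          rcases Finset.mem_insert.1 ha with rfl | haS <;> rcases Finset.mem_insert.1 hb with rfl | hbS
          · exact absurd rfl hab
          · exact (Finset.mem_filter.1 (hSV hbS)).2
          · exact hs _ _ _ (Finset.mem_filter.1 (hSV haS)).2
          · exact hSP a haS b hbS hab
      · refine ⟨S, j, fun u hu => Finset.mem_of_mem_erase (Finset.mem_filter.1 (hSV hu)).1, ?_, hSP⟩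
        rw [hSc, Function.update_of_ne hij]

theorem setRamsey_finite (r s k : ℕ) (hs : 1 ≤ s) (hr : 0 < r) :
    ∃ n, HasSetColouringRamsey r s k n := by
  obtain ⟨n, hn⟩ := ramsey_aux r hr _ (fun _ => k) rfl
  refine ⟨n, fun χ hsym hcard => ?_⟩
  obtain ⟨S, i, -, h1, h2⟩ := hn (Fin n) (fun i u v => i ∈ χ u v)
    (fun i u v h => by rw [hsym]; exact h)
    (fun u v huv => by
      have : 0 < (χ u v).card := by rw [hcard u v huv]; omega
      exact Finset.card_pos.1 this) Finset.univ (by simp)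
  exact ⟨S, i, h1, h2⟩

/-- The number of coordinates where two words agree. -/
def agree {r m : ℕ} (x y : Fin r → Fin m) : ℕ := (Finset.univ.filter (fun i => x i = y i)).card

theorem agree_comm {r m : ℕ} (x y : Fin r → Fin m) : agree x y = agree y x := by
  unfold agree; simp only [eq_comm]

theorem sum_agree {r m : ℕ} (δ : ℝ) (x : Fin r → Fin m) :
    ∑ w : Fin r → Fin m, (1 + δ) ^ agree x w = ((m : ℝ) + δ) ^ r := by
  have h1 : ∀ w : Fin r → Fin m,
      (1 + δ) ^ agree x w = ∏ i, (1 + if x i = w i then δ else 0) := by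
    intro w
    unfold agree
    rw [← Finset.prod_const, Finset.prod_filter]
    refine Finset.prod_congr rfl fun i _ => ?_
    split_ifs <;> simp
  simp_rw [h1]
  have h2 := Finset.prod_univ_sum (fun _ : Fin r => (Finset.univ : Finset (Fin m)))
    (fun i j => (1 + if x i = j then δ else 0 : ℝ))
  rw [Fintype.piFinset_univ] at h2
  rw [← h2]
  simp [Finset.sum_add_distrib]

theorem bad_card {r m d : ℕ} (hm : 0 < m) (δ : ℝ) (hδ : 0 < δ)
    (h : (m : ℝ) * d ≥ (1 + δ) * r) (x : Fin r → Fin m) :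
    ((Finset.univ.filter (fun w => d < agree x w)).card : ℝ) ≤
      (m : ℝ) ^ r * Real.exp (-((Real.log (1 + δ) - δ / (1 + δ)) * d)) := by
  have hm' : (0 : ℝ) < m := by exact_mod_cast hm
  have h1 : ((Finset.univ.filter (fun w => d < agree x w)).card : ℝ) * (1 + δ) ^ d
      ≤ ((m : ℝ) + δ) ^ r := by
    rw [← sum_agree δ x, ← nsmul_eq_mul, ← Finset.sum_const]
    refine (Finset.sum_le_sum (g := fun w => (1 + δ) ^ agree x w) ?_).trans
      (Finset.sum_le_sum_of_subset_of_nonneg (Finset.subset_univ _) ?_)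
    · intro w hw
      exact pow_le_pow_right₀ (by linarith) (Finset.mem_filter.1 hw).2.le
    · intros; positivity
  have h2 : ((m : ℝ) + δ) ^ r ≤ (m : ℝ) ^ r * Real.exp (δ / (1 + δ) * d) := by
    have e1 : (m : ℝ) + δ ≤ m * Real.exp (δ / m) := by
      have := Real.add_one_le_exp (δ / m)
      calc (m : ℝ) + δ = m * (δ / m + 1) := by field_simp; ring
        _ ≤ _ := by gcongr
    calc ((m : ℝ) + δ) ^ r ≤ (m * Real.exp (δ / m)) ^ r := by gcongr
      _ = (m : ℝ) ^ r * Real.exp (r * (δ / m)) := by rw [mul_pow, Real.exp_nat_mul]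
      _ ≤ _ := by
        refine mul_le_mul_of_nonneg_left (Real.exp_le_exp.2 ?_) (by positivity)
        rw [mul_div_assoc', div_mul_eq_mul_div, div_le_div_iff₀ hm' (by linarith)]
        nlinarith
  have h3 : (1 + δ) ^ d = Real.exp (Real.log (1 + δ) * d) := by
    rw [mul_comm, Real.exp_nat_mul, Real.exp_log (by linarith)]
  rw [h3] at h1
  have h4 : (m : ℝ) ^ r * Real.exp (-((Real.log (1 + δ) - δ / (1 + δ)) * d)) =
      ((m : ℝ) ^ r * Real.exp (δ / (1 + δ) * d)) / Real.exp (Real.log (1 + δ) * d) := by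
    rw [mul_div_assoc, ← Real.exp_sub]
    congr 2
    ring
  rw [h4, le_div_iff₀ (Real.exp_pos _)]
  exact h1.trans h2

theorem code_exists {r m d : ℕ} (hm : 0 < m) (δ : ℝ) (hδ : 0 < δ)
    (h : (m : ℝ) * d ≥ (1 + δ) * r) (n : ℕ)
    (hn : (n : ℝ) < Real.exp ((Real.log (1 + δ) - δ / (1 + δ)) * d)) :
    ∃ f : ℕ → Fin r → Fin m, ∀ i j, i < j → j < n → agree (f i) (f j) ≤ d := by
  induction n with
  | zero => exact ⟨fun _ _ => ⟨0, hm⟩, by simp⟩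
  | succ n ih =>
    push_cast at hn
    have hn' : (n : ℝ) < Real.exp ((Real.log (1 + δ) - δ / (1 + δ)) * d) := by linarith
    obtain ⟨f, hf⟩ := ih hn'
    have hex : ∃ w, ∀ i < n, agree (f i) w ≤ d := by
      by_contra hcon
      push Not at hcon
      have hsub : (Finset.univ : Finset (Fin r → Fin m)) ⊆
          (Finset.range n).biUnion (fun i => Finset.univ.filter (fun w => d < agree (f i) w)) := by
        intro w _
        obtain ⟨i, hi, hw⟩ := hcon w
        simp only [Finset.mem_biUnion, Finset.mem_range, Finset.mem_filter, Finset.mem_univ, true_and]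
        exact ⟨i, hi, hw⟩
      have hcard := (Finset.card_le_card hsub).trans Finset.card_biUnion_le
      have h1 : ((m : ℝ)) ^ r ≤ ∑ i ∈ Finset.range n,
          ((Finset.univ.filter (fun w => d < agree (f i) w)).card : ℝ) := by
        have : (m ^ r : ℕ) ≤ ∑ i ∈ Finset.range n,
          (Finset.univ.filter (fun w => d < agree (f i) w)).card := by simpa using hcard
        exact_mod_cast this
      have h2 := h1.trans (Finset.sum_le_sum (fun i _ => bad_card hm δ hδ h (f i)))
      rw [Finset.sum_const, Finset.card_range, nsmul_eq_mul, Real.exp_neg] at h2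
      have hpos : (0 : ℝ) < (m : ℝ) ^ r := by positivity
      have hE := Real.exp_pos ((Real.log (1 + δ) - δ / (1 + δ)) * d)
      have h3 : (n : ℝ) * ((m : ℝ) ^ r * (Real.exp ((Real.log (1 + δ) - δ / (1 + δ)) * d))⁻¹)
          = (m : ℝ) ^ r * (n / Real.exp ((Real.log (1 + δ) - δ / (1 + δ)) * d)) := by
        field_simp
      rw [h3] at h2
      have h4 := (div_lt_one hE).2 hn'
      nlinarith
    obtain ⟨w, hw⟩ := hex
    refine ⟨Function.update f n w, fun i j hij hj => ?_⟩
    have hin : i < n := by omega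
    rw [Function.update_of_ne hin.ne]
    rcases Nat.lt_succ_iff_lt_or_eq.1 hj with hj | rfl
    · rw [Function.update_of_ne hj.ne]
      exact hf i j hij hj
    · rw [Function.update_self]
      exact hw i hin

theorem not_hasSetColouringRamsey {r s m n : ℕ} (hsr : s < r) (f : ℕ → Fin r → Fin m)
    (hf : ∀ i j, i < j → j < n → agree (f i) (f j) ≤ r - s) :
    ¬ HasSetColouringRamsey r s (m + 1) n := by
  classical
  intro H
  have hg : ∀ A : Finset (Fin r), ∃ B ⊆ A, s ≤ A.card → B.card = s := by
    intro A
    by_cases h : s ≤ A.card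
    · obtain ⟨B, hB, hc⟩ := Finset.exists_subset_card_eq h
      exact ⟨B, hB, fun _ => hc⟩
    · exact ⟨∅, by simp, fun h' => absurd h' h⟩
  choose g hg1 hg2 using hg
  obtain ⟨S, i, hS, hSi⟩ := H
    (fun u v => g (Finset.univ.filter (fun i => f u i ≠ f v i)))
    (fun u v => by simp only [ne_comm])
    (fun u v huv => by
      apply hg2
      have h1 := Finset.card_filter_add_card_filter_not
        (s := (Finset.univ : Finset (Fin r))) (fun i => f u i = f v i)
      have h2 : agree (f u) (f v) ≤ r - s := by
        rcases lt_or_gt_of_ne huv with h | h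
        · exact hf _ _ h v.2
        · rw [agree_comm]; exact hf _ _ h u.2
      unfold agree at h2
      simp only [Finset.card_univ, Fintype.card_fin] at h1
      simp only [ne_eq]
      omega)
  obtain ⟨u, hu, v, hv, huv, he⟩ := Finset.exists_ne_map_eq_of_card_lt_of_maps_to
    (s := S) (t := (Finset.univ : Finset (Fin m))) (f := fun u => f u i)
    (by simp [hS]) (fun _ _ => by simp)
  exact (Finset.mem_filter.1 (hg1 _ (hSi u hu v hv huv))).2 he

theorem setRamsey_exponential_lower_bound (δ : ℝ) (hδ : 0 < δ) :
    ∃ c > (0 : ℝ), ∀ r s k : ℕ, s < r → 1 ≤ s →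
      ((k : ℝ) - 1) * ((r : ℝ) - s) ≥ (1 + δ) * r →
      (setRamsey r s k : ℝ) ≥ Real.exp (c * ((r : ℝ) - s)) := by
  refine ⟨Real.log (1 + δ) - δ / (1 + δ), ?_, ?_⟩
  · have h1 : (0 : ℝ) < 1 + δ := by linarith
    have h2 := Real.log_lt_sub_one_of_pos (inv_pos.2 h1) (by
      intro h
      rw [inv_eq_one] at h
      linarith)
    rw [Real.log_inv] at h2
    have h3 : δ / (1 + δ) = 1 - (1 + δ)⁻¹ := by field_simp; ring
    linarith
  · intro r s k hsr hs hk
    have hrs : (0 : ℝ) < (r : ℝ) - s := by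
      have : (s : ℝ) < r := by exact_mod_cast hsr
      linarith
    have hr : (0 : ℝ) < r := by
      have : 0 < r := by omega
      exact_mod_cast this
    have hk1 : (0 : ℝ) < (k : ℝ) - 1 := by
      by_contra hcon
      push Not at hcon
      have : 0 < (1 + δ) * r := by positivity
      nlinarith
    have hk2 : 1 < k := by
      have : (1 : ℝ) < k := by linarith
      exact_mod_cast this
    obtain ⟨m, rfl⟩ : ∃ m, k = m + 1 := ⟨k - 1, by omega⟩
    have hmem : HasSetColouringRamsey r s (m + 1) (setRamsey r s (m + 1)) :=
      Nat.sInf_mem (s := {n | HasSetColouringRamsey r s (m + 1) n})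
        (setRamsey_finite r s (m + 1) hs (by omega))
    by_contra hcon
    rw [ge_iff_le, not_le] at hcon
    rw [← Nat.cast_sub hsr.le] at hcon hk
    push_cast at hk
    rw [add_sub_cancel_right] at hk
    obtain ⟨f, hf⟩ := code_exists (by omega) δ hδ hk _ hcon
    exact not_hasSetColouringRamsey hsr f hf hmem
end

section
/- For all integers r > s ≥ 1 and every integer k ≥ 2 with k·(r − s) ≤ r, one has R_{r,s}(k) ≤ k². Equivalently, every colouring assigning to each edge of the complete graph on k² vertices a set of s colours from {1,…,r} contains a monochromatic clique of size k, provided k·(r−s) ≤ r. -/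
theorem setRamsey_turan_range (r s k : ℕ) (hsr : s < r) (hs : 1 ≤ s)
    (hk : 2 ≤ k) (hkrs : k * (r - s) ≤ r) :
    setRamsey r s k ≤ k ^ 2 := by
  classical
  apply Nat.sInf_le
  intro χ hsym hcard
  by_contra hcon
  push Not at hcon
  obtain ⟨m, rfl⟩ : ∃ m, k = m + 2 := ⟨k - 2, by omega⟩
  obtain ⟨d, rfl⟩ : ∃ d, r = s + d := ⟨r - s, by omega⟩
  let G : Fin (s + d) → SimpleGraph (Fin ((m + 2) ^ 2)) := fun i =>
    { Adj := fun u v => u ≠ v ∧ i ∈ χ u v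
      symm := ⟨fun u v h => ⟨h.1.symm, by rw [hsym]; exact h.2⟩⟩
      loopless := ⟨fun u h => h.1 rfl⟩ }
  have hfree : ∀ i, (G i).CliqueFree (m + 1 + 1) := by
    intro i S hS
    obtain ⟨u, hu, v, hv, huv, hi⟩ := hcon S i hS.card_eq
    exact hi (hS.isClique hu hv huv).2
  have hT : ∀ i, 2 * (m + 1) * (G i).edgeFinset.card ≤ m * ((m + 2) ^ 2) ^ 2 := by
    intro i
    have h1 := SimpleGraph.mul_card_edgeFinset_turanGraph_le (n := (m + 2) ^ 2) (r := m + 1)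
    have h2 := (SimpleGraph.isTuranMaximal_turanGraph (n := (m + 2) ^ 2)
      (r := m + 1) (by omega)).2 (hfree i)
    calc _ ≤ 2 * (m + 1) * (SimpleGraph.turanGraph ((m + 2) ^ 2) (m + 1)).edgeFinset.card :=
          Nat.mul_le_mul_left _ (by convert h2)
      _ ≤ _ := by simpa using h1
  have hE : ∀ i, 2 * (G i).edgeFinset.card
      = ∑ u, ∑ v, if u ≠ v ∧ i ∈ χ u v then 1 else 0 := by
    intro i
    rw [← SimpleGraph.sum_degrees_eq_twice_card_edges]
    refine Finset.sum_congr rfl fun u _ => ?_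
    rw [← SimpleGraph.card_neighborFinset_eq_degree, SimpleGraph.neighborFinset_eq_filter,
      Finset.card_filter]
  have hsum : ∑ i, 2 * (G i).edgeFinset.card
      = (m + 2) ^ 2 * (((m + 2) ^ 2 - 1) * s) := by
    simp_rw [hE]
    rw [Finset.sum_comm]
    have : ∀ u : Fin ((m + 2) ^ 2),
        (∑ i, ∑ v, if u ≠ v ∧ i ∈ χ u v then 1 else 0) = ((m + 2) ^ 2 - 1) * s := by
      intro u
      rw [Finset.sum_comm]
      have h : ∀ v, (∑ i, if u ≠ v ∧ i ∈ χ u v then 1 else 0) = if u ≠ v then s else 0 := by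
        intro v
        by_cases huv : u = v
        · simp [huv]
        · simp [huv, hcard u v huv]
      simp_rw [h]
      rw [← Finset.sum_filter, Finset.sum_const, Finset.filter_ne]
      simp
    simp_rw [this]
    simp
  have hle : ∑ i, (m + 1) * (2 * (G i).edgeFinset.card)
      ≤ ∑ _i : Fin (s + d), m * ((m + 2) ^ 2) ^ 2 :=
    Finset.sum_le_sum fun i _ => by have := hT i; linarith
  rw [← Finset.mul_sum, hsum] at hle
  simp only [Finset.sum_const, Finset.card_univ, Fintype.card_fin, smul_eq_mul] at hle
  have hd : (m + 1) * d ≤ s := by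
    rw [Nat.add_sub_cancel_left] at hkrs
    linarith
  obtain ⟨q, hq⟩ : ∃ q, (m + 2) ^ 2 = q + 1 := ⟨(m + 2) ^ 2 - 1, by
    have : 0 < (m + 2) ^ 2 := by positivity
    omega⟩
  rw [hq] at hle
  simp only [Nat.add_sub_cancel] at hle
  have h3 : (m + 1) * (q * s) ≤ (s + d) * (m * (q + 1)) := by
    refine le_of_mul_le_mul_left (a := q + 1) ?_ (by omega)
    linarith
  have h4 : (m + 1) * ((m + 1) * (q * s)) ≤ (m + 2) * s * (m * (q + 1)) := by
    calc _ ≤ (m + 1) * ((s + d) * (m * (q + 1))) := Nat.mul_le_mul_left _ h3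
      _ = ((m + 1) * s + (m + 1) * d) * (m * (q + 1)) := by ring
      _ ≤ ((m + 1) * s + s) * (m * (q + 1)) := by gcongr
      _ = _ := by ring
  have h5 : (m + 1) * (m + 1) * q ≤ (m + 2) * (m * (q + 1)) := by
    refine le_of_mul_le_mul_left (a := s) ?_ (by omega)
    linarith
  nlinarith
end

section
/- Let r > s ≥ 1, m ≥ 1 and n ≥ 1 be integers such that n² · C(r, r−s) ≤ m^{r−s}, where C(r, r−s) denotes the binomial coefficient. Then there exist functions φ_1, …, φ_r : {1,…,n} → {1,…,m} such that for every pair of distinct u, v ∈ {1,…,n}, the number of indices i ∈ {1,…,r} with φ_i(u) ≠ φ_i(v) is at least s. -/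
lemma bad_card_s5 (r s m : ℕ) (hsr : s < r) (w : Fin r → Fin m) :
    (Finset.univ.filter fun x : Fin r → Fin m =>
      (Finset.univ.filter fun i => x i ≠ w i).card < s).card ≤ Nat.choose r (r - s) * m ^ s := by
  classical
  have hsub : (Finset.univ.filter fun x : Fin r → Fin m =>
      (Finset.univ.filter fun i => x i ≠ w i).card < s) ⊆
      (Finset.powersetCard (r - s) (Finset.univ : Finset (Fin r))).biUnion
        (fun T => Fintype.piFinset (fun i => if i ∈ T then {w i} else Finset.univ)) := by
    intro x hx
    rw [Finset.mem_filter] at hx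
    have h1 := Finset.card_filter_add_card_filter_not
      (s := (Finset.univ : Finset (Fin r))) (fun i => x i = w i)
    have h2 : r - s ≤ (Finset.univ.filter fun i => x i = w i).card := by
      have := hx.2
      simp only [Finset.card_univ, Fintype.card_fin] at h1
      simp only [ne_eq] at this
      omega
    obtain ⟨T, hT, hc⟩ := Finset.exists_subset_card_eq h2
    rw [Finset.mem_biUnion]
    refine ⟨T, by simp [Finset.mem_powersetCard, hc], ?_⟩
    rw [Fintype.mem_piFinset]
    intro i
    by_cases hi : i ∈ T
    · have := hT hi
      simpa [hi] using this
    · simp [hi]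
  refine (Finset.card_le_card hsub).trans ?_
  have := Finset.card_biUnion_le_card_mul
    (Finset.powersetCard (r - s) (Finset.univ : Finset (Fin r)))
    (fun T => Fintype.piFinset (fun i => if i ∈ T then {w i} else (Finset.univ : Finset (Fin m))))
    (m ^ s) ?_
  · simpa using this
  · intro T hT
    have hc := (Finset.mem_powersetCard.1 hT).2
    rw [Fintype.card_piFinset]
    have : ∀ i, (if i ∈ T then {w i} else (Finset.univ : Finset (Fin m))).card
        = if i ∈ T then 1 else m := by
      intro i; split_ifs <;> simp
    simp only [this]
    rw [Finset.prod_ite]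
    have hcc : (Finset.univ.filter fun i => i ∉ T).card = s := by
      have : (Finset.univ.filter fun i => i ∉ T) = Tᶜ := by ext; simp
      rw [this, Finset.card_compl, hc, Fintype.card_fin]; omega
    simp [hcc]

theorem exists_separating_functions (r s m n : ℕ) (hsr : s < r) (hs : 1 ≤ s)
    (hm : 1 ≤ m) (hn : 1 ≤ n)
    (hcount : n ^ 2 * Nat.choose r (r - s) ≤ m ^ (r - s)) :
    ∃ φ : Fin r → Fin n → Fin m,
      ∀ u v : Fin n, u ≠ v →
        s ≤ (Finset.univ.filter fun i : Fin r => φ i u ≠ φ i v).card := by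
  classical
  have key : ∀ k ≤ n, ∃ A : Finset (Fin r → Fin m), A.card = k ∧
      ∀ x ∈ A, ∀ y ∈ A, x ≠ y → s ≤ (Finset.univ.filter fun i => x i ≠ y i).card := by
    intro k
    induction k with
    | zero => intro _; exact ⟨∅, by simp⟩
    | succ k ih =>
      intro hk
      obtain ⟨A, hA, hd⟩ := ih (by omega)
      have hb := Finset.card_biUnion_le_card_mul A
        (fun w => Finset.univ.filter fun x : Fin r → Fin m =>
          (Finset.univ.filter fun i => x i ≠ w i).card < s) _
        (fun w _ => bad_card_s5 r s m hsr w)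
      have hlt : A.card * (Nat.choose r (r - s) * m ^ s)
          < (Finset.univ : Finset (Fin r → Fin m)).card := by
        have hC : 0 < Nat.choose r (r - s) := Nat.choose_pos (by omega)
        have hms : 0 < m ^ s := Nat.pow_pos hm
        have e : m ^ r = m ^ (r - s) * m ^ s := by rw [← pow_add]; congr 1; omega
        have h1 : k < n ^ 2 := by nlinarith
        rw [hA, Finset.card_univ, Fintype.card_fun, Fintype.card_fin, Fintype.card_fin, e,
          ← mul_assoc]
        exact Nat.mul_lt_mul_of_pos_right
          (lt_of_lt_of_le (Nat.mul_lt_mul_of_pos_right h1 hC) hcount) hms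
      obtain ⟨x, -, hx⟩ := Finset.exists_mem_notMem_of_card_lt_card (lt_of_le_of_lt hb hlt)
      have hx' : ∀ w ∈ A, s ≤ (Finset.univ.filter fun i => x i ≠ w i).card := by
        intro w hw
        by_contra h
        exact hx (Finset.mem_biUnion.2 ⟨w, hw, by simpa using h⟩)
      have hxA : x ∉ A := by
        intro h
        have := hx' x h
        simp at this
        omega
      refine ⟨insert x A, by rw [Finset.card_insert_of_notMem hxA, hA], ?_⟩
      intro y hy z hz hyz
      rcases Finset.mem_insert.1 hy with rfl | hy1 <;> rcases Finset.mem_insert.1 hz with rfl | hz1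
      · exact absurd rfl hyz
      · exact hx' z hz1
      · have := hx' y hy1
        simp_rw [ne_comm (a := y _)]
        exact this
      · exact hd y hy1 z hz1 hyz
  obtain ⟨A, hA, hd⟩ := key n le_rfl
  let e := (A.equivFinOfCardEq hA).symm
  refine ⟨fun i u => (e u).1 i, fun u v huv => hd _ (e u).2 _ (e v).2 ?_⟩
  intro h
  exact huv (e.injective (Subtype.ext h))
end

section
/- Let k ≥ 2, t ≥ 1 and r ≥ 1 be integers, let ε > 0 be real, and let 0 < δ < 1/16. Let F be a graph with exactly k vertices and exactly t edges, and let Q_1, …, Q_r be subsets of V(F). Set L = ⌈log₂ k⌉, and for each j ∈ {1,…,L} define A_j = {v ∈ V(F) : k/2^j ≤ deg_F(v) < k/2^{j−1}}. Define s_j = Σ_{i=1}^r |A_j ∩ Q_i| and X = Σ_{i=1}^r Σ_{v ∈ Q_i} deg_F(v). If X ≥ ε·r·t/2, then there exists ℓ ∈ {1,…,L} such that s_ℓ > δ·ε·r·Σ_{j=1}^ℓ |A_j|. -/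
theorem geom_aux (k : ℝ) (a : ℕ → ℝ) (L : ℕ) :
    (∑ l ∈ Finset.Icc 1 L, k / 2 ^ (l - 1) * ∑ j ∈ Finset.Icc 1 l, a j)
      + 2 * k / 2 ^ L * ∑ j ∈ Finset.Icc 1 L, a j
      = ∑ j ∈ Finset.Icc 1 L, 4 * (k / 2 ^ j * a j) := by
  induction L with
  | zero => simp
  | succ n ih =>
    rw [Finset.sum_Icc_succ_top (by omega), Finset.sum_Icc_succ_top (by omega) (fun j => 4 * (k / 2 ^ j * a j)), ← ih,
      Finset.sum_Icc_succ_top (by omega) a]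
    simp only [Nat.add_sub_cancel, pow_succ]
    field_simp
    ring


set_option maxHeartbeats 1000000 in
theorem bottleneck_event (V : Type*) [Fintype V] [DecidableEq V]
    (F : SimpleGraph V) [DecidableRel F.Adj]
    (k t r : ℕ) (ε δ : ℝ)
    (hk : 2 ≤ k) (ht : 1 ≤ t) (hr : 1 ≤ r)
    (hε : 0 < ε) (hδ0 : 0 < δ) (hδ : δ < 1 / 16)
    (hV : Fintype.card V = k) (hE : F.edgeFinset.card = t)
    (Q : Fin r → Finset V)
    (L : ℕ) (hL : L = ⌈Real.logb 2 (k : ℝ)⌉₊)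
    (A : ℕ → Finset V)
    (hA : ∀ j, A j = Finset.univ.filter fun v =>
        (k : ℝ) / 2 ^ j ≤ (F.degree v : ℝ) ∧
          (F.degree v : ℝ) < (k : ℝ) / 2 ^ (j - 1))
    (hX : ε * r * t / 2 ≤ ∑ i : Fin r, ∑ v ∈ Q i, (F.degree v : ℝ)) :
    ∃ ℓ ∈ Finset.Icc 1 L,
      δ * ε * r * (∑ j ∈ Finset.Icc 1 ℓ, ((A j).card : ℝ)) <
        ∑ i : Fin r, (((A ℓ) ∩ Q i).card : ℝ) := by
  by_contra hcon
  push Not at hcon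
  have hk0 : (0 : ℝ) < k := by exact_mod_cast (by omega : 0 < k)
  have hkL : (k : ℝ) ≤ 2 ^ L := by
    have h1 : Real.logb 2 (k : ℝ) ≤ (L : ℝ) := by rw [hL]; exact Nat.le_ceil _
    rw [Real.logb_le_iff_le_rpow (by norm_num) hk0] at h1
    exact_mod_cast h1
  have hcover : ∀ v, (F.degree v : ℝ) ≤
      ∑ l ∈ Finset.Icc 1 L, if v ∈ A l then (k : ℝ) / 2 ^ (l - 1) else 0 := by
    intro v
    have hnn : ∀ l ∈ Finset.Icc 1 L, (0 : ℝ) ≤ if v ∈ A l then (k : ℝ) / 2 ^ (l - 1) else 0 := by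
      intro l _
      split_ifs <;> positivity
    rcases Nat.eq_zero_or_pos (F.degree v) with h0 | h0
    · rw [h0]; simpa using Finset.sum_nonneg hnn
    have h1 : (1 : ℝ) ≤ F.degree v := by exact_mod_cast h0
    have hlt : (F.degree v : ℝ) < k := by
      have := F.degree_lt_card_verts v
      rw [hV] at this
      exact_mod_cast this
    have hLw : (k : ℝ) / 2 ^ L ≤ F.degree v :=
      ((div_le_one (by positivity)).2 hkL).trans h1
    classical
    have hex : ∃ j : ℕ, (k : ℝ) / 2 ^ j ≤ F.degree v := ⟨L, hLw⟩
    obtain ⟨m, hm⟩ : ∃ m, m = Nat.find hex := ⟨_, rfl⟩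
    have hs : (k : ℝ) / 2 ^ m ≤ F.degree v := hm ▸ Nat.find_spec hex
    have hmL : m ≤ L := hm ▸ Nat.find_min' hex hLw
    have hm1 : 1 ≤ m := by
      by_contra h
      have : m = 0 := by omega
      subst this
      simp at hs
      have : (k : ℝ) ≤ F.degree v := by exact_mod_cast hs
      linarith
    have hlow : (F.degree v : ℝ) < k / 2 ^ (m - 1) := by
      have := Nat.find_min hex (m := m - 1) (by omega)
      exact lt_of_not_ge this
    have hmem : v ∈ A m := by rw [hA]; simp only [Finset.mem_filter, Finset.mem_univ, true_and]; exact ⟨hs, hlow⟩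
    have := Finset.single_le_sum hnn (Finset.mem_Icc.2 ⟨hm1, hmL⟩)
    rw [if_pos hmem] at this
    linarith
  have hupper : ∑ i : Fin r, ∑ v ∈ Q i, (F.degree v : ℝ) ≤
      ∑ l ∈ Finset.Icc 1 L, (k : ℝ) / 2 ^ (l - 1) * ∑ i : Fin r, (((A l) ∩ Q i).card : ℝ) := by
    simp_rw [Finset.mul_sum]
    rw [Finset.sum_comm]
    refine Finset.sum_le_sum fun i _ => ?_
    refine (Finset.sum_le_sum fun v _ => hcover v).trans ?_
    rw [Finset.sum_comm]
    refine Finset.sum_le_sum fun l _ => ?_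
    rw [← Finset.sum_filter, Finset.sum_const, nsmul_eq_mul, mul_comm, Finset.filter_mem_eq_inter,
      Finset.inter_comm]
  have hdisj : ∀ i j : ℕ, i < j → Disjoint (A i) (A j) := by
    intro i j hij
    rw [Finset.disjoint_left]
    intro v hi hj
    rw [hA] at hi hj
    simp only [Finset.mem_filter, Finset.mem_univ, true_and] at hi hj
    have : (k : ℝ) / 2 ^ (j - 1) ≤ k / 2 ^ i := by
      gcongr
      · norm_num
      · omega
    linarith [hi.1, hj.2]
  have hlower : ∑ j ∈ Finset.Icc 1 L, (k : ℝ) / 2 ^ j * ((A j).card : ℝ) ≤ 2 * t := by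
    have hsum : ∑ v, (F.degree v : ℝ) = 2 * t := by
      have := F.sum_degrees_eq_twice_card_edges
      rw [hE] at this
      exact_mod_cast this
    rw [← hsum]
    calc _ ≤ ∑ j ∈ Finset.Icc 1 L, ∑ v ∈ A j, (F.degree v : ℝ) := by
          refine Finset.sum_le_sum fun j _ => ?_
          rw [mul_comm, ← nsmul_eq_mul]
          refine Finset.card_nsmul_le_sum _ _ _ fun v hv => ?_
          rw [hA] at hv
          exact (Finset.mem_filter.1 hv).2.1
      _ = ∑ v ∈ (Finset.Icc 1 L).biUnion A, (F.degree v : ℝ) := by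
          rw [Finset.sum_biUnion]
          intro i _ j _ hij
          rcases lt_or_gt_of_ne hij with h | h
          · exact hdisj i j h
          · exact (hdisj j i h).symm
      _ ≤ _ := Finset.sum_le_sum_of_subset_of_nonneg (Finset.subset_univ _)
          fun _ _ _ => by positivity
  have hmid : ∑ l ∈ Finset.Icc 1 L, (k : ℝ) / 2 ^ (l - 1) * ∑ i : Fin r, (((A l) ∩ Q i).card : ℝ)
      ≤ δ * ε * r * ∑ l ∈ Finset.Icc 1 L, (k : ℝ) / 2 ^ (l - 1) *
        ∑ j ∈ Finset.Icc 1 l, ((A j).card : ℝ) := by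
    rw [Finset.mul_sum]
    refine Finset.sum_le_sum fun l hl => ?_
    calc _ ≤ (k : ℝ) / 2 ^ (l - 1) * (δ * ε * r * (∑ j ∈ Finset.Icc 1 l, ((A j).card : ℝ))) :=
          mul_le_mul_of_nonneg_left (hcon l hl) (by positivity)
      _ = _ := by ring
  have hg := geom_aux (k : ℝ) (fun j => ((A j).card : ℝ)) L
  rw [← Finset.mul_sum (Finset.Icc 1 L) (fun j => (k : ℝ) / 2 ^ j * ((A j).card : ℝ)) 4] at hg
  have hp : (0 : ℝ) ≤ 2 * k / 2 ^ L * ∑ j ∈ Finset.Icc 1 L, ((A j).card : ℝ) :=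
    mul_nonneg (by positivity) (Finset.sum_nonneg fun j _ => Nat.cast_nonneg _)
  have hT : ∑ l ∈ Finset.Icc 1 L, (k : ℝ) / 2 ^ (l - 1) *
        ∑ j ∈ Finset.Icc 1 l, ((A j).card : ℝ) ≤ 8 * t := by linarith
  have hr0 : (0 : ℝ) < r := by exact_mod_cast hr
  have ht0 : (0 : ℝ) < t := by exact_mod_cast ht
  have hfin := mul_le_mul_of_nonneg_left hT (by positivity : 0 ≤ δ * ε * r)
  have hpos : 0 < ε * r * t := by positivity
  nlinarith [mul_lt_mul_of_pos_right hδ hpos]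
end

section
/- For every real δ with 0 < δ ≤ 2 there exists a constant c > 0 such that the following holds for all integers r > s ≥ 1 and k ≥ 2 with (k − 1)·(r − s) ≥ (1 + δ)·r. For every integer n ≥ 1 with n ≤ exp(c·(r − s)), there exist functions φ_1, …, φ_r : {1,…,n} → {1,…,k−1} such that for every pair of distinct u, v ∈ {1,…,n}, the number of indices i ∈ {1,…,r} with φ_i(u) ≠ φ_i(v) is at least s. -/
theorem greedy_aux {α : Type*} [Fintype α] [DecidableEq α] (R : α → α → Prop)
    [∀ x y, Decidable (R x y)]
    (hs : ∀ x y, R x y → R y x) (B : ℝ) (hB0 : 0 ≤ B)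
    (hB : ∀ x, ((Finset.univ.filter fun y => R x y).card : ℝ) ≤ B) (n : ℕ)
    (hn : ((n : ℝ) - 1) * B < Fintype.card α) :
    ∃ f : Fin n → α, ∀ u v : Fin n, u ≠ v → ¬ R (f u) (f v) := by
  induction n with
  | zero => exact ⟨fun i => i.elim0, fun u => u.elim0⟩
  | succ n ih =>
    push_cast at hn
    have hn' : (n : ℝ) * B < Fintype.card α := by simpa using hn
    · obtain ⟨f, hf⟩ := ih (by nlinarith)
      have hc : ((Finset.univ.biUnion fun u : Fin n =>
          Finset.univ.filter fun y => R (f u) y).card : ℝ) < Fintype.card α := by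
        refine lt_of_le_of_lt ?_ hn'
        calc _ ≤ ((∑ u : Fin n, (Finset.univ.filter fun y => R (f u) y).card : ℕ) : ℝ) := by
              exact_mod_cast Finset.card_biUnion_le
          _ ≤ ∑ u : Fin n, B := by
              push_cast
              exact Finset.sum_le_sum fun u _ => hB (f u)
          _ = n * B := by simp
      have hc' : (Finset.univ.biUnion fun u : Fin n =>
          Finset.univ.filter fun y => R (f u) y).card < (Finset.univ : Finset α).card := by
        exact_mod_cast hc
      obtain ⟨y, -, hy⟩ := Finset.exists_mem_notMem_of_card_lt_card hc'
      have hy' : ∀ u, ¬ R (f u) y := by simpa using hy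
      refine ⟨Fin.cons y f, fun u v huv => ?_⟩
      induction u using Fin.cases with
      | zero =>
        induction v using Fin.cases with
        | zero => exact absurd rfl huv
        | succ v => simpa using fun h => hy' v (hs _ _ h)
      | succ u =>
        induction v using Fin.cases with
        | zero => simpa using hy' u
        | succ v => simpa using hf u v (fun h => huv (by rw [h]))

theorem sum_pow_agree (r m : ℕ) (t : ℝ) (x : Fin r → Fin m) :
    ∑ y : Fin r → Fin m, t ^ (Finset.univ.filter fun i => x i = y i).card
      = ((m : ℝ) - 1 + t) ^ r := by
  have h1 : ∀ y : Fin r → Fin m, t ^ (Finset.univ.filter fun i => x i = y i).card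
      = ∏ i, (if x i = y i then t else 1) := by
    intro y
    rw [Finset.prod_ite]; simp
  simp_rw [h1]
  rw [← Fintype.prod_sum (fun i j => if x i = j then t else (1 : ℝ))]
  have h2 : ∀ i, ∑ j : Fin m, (if x i = j then t else (1 : ℝ)) = (m : ℝ) - 1 + t := by
    intro i
    have : ∀ j : Fin m, (if x i = j then t else (1 : ℝ)) = 1 + (if x i = j then t - 1 else 0) := by
      intro j; split_ifs <;> ring
    simp_rw [this, Finset.sum_add_distrib]
    simp; ring
  simp [h2]

theorem exists_separating_functions_near_turan (δ : ℝ) (hδ0 : 0 < δ)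
    (hδ2 : δ ≤ 2) :
    ∃ c > (0 : ℝ), ∀ r s k n : ℕ, s < r → 1 ≤ s → 2 ≤ k →
      ((k : ℝ) - 1) * ((r : ℝ) - s) ≥ (1 + δ) * r →
      1 ≤ n → (n : ℝ) ≤ Real.exp (c * ((r : ℝ) - s)) →
      ∃ φ : Fin r → Fin n → Fin (k - 1),
        ∀ u v : Fin n, u ≠ v →
          s ≤ (Finset.univ.filter fun i : Fin r => φ i u ≠ φ i v).card := by
  refine ⟨Real.log (1 + δ) - δ / (1 + δ), ?_, ?_⟩
  · have h := Real.log_lt_sub_one_of_pos (x := (1 + δ)⁻¹) (by positivity)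
      (by intro h; rw [inv_eq_one] at h; linarith)
    rw [Real.log_inv] at h
    have : δ / (1 + δ) = 1 - (1 + δ)⁻¹ := by field_simp; ring
    rw [this]; linarith
  intro r s k n hsr hs hk hkr hn hne
  obtain ⟨m, rfl⟩ : ∃ m, k = m + 1 := ⟨k - 1, by omega⟩
  obtain ⟨d, rfl⟩ : ∃ d, r = s + d := ⟨r - s, by omega⟩
  have hm : 1 ≤ m := by omega
  have hmR : (1 : ℝ) ≤ m := by exact_mod_cast hm
  change ∃ φ : Fin (s + d) → Fin n → Fin m, ∀ u v : Fin n, u ≠ v →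
          s ≤ (Finset.univ.filter fun i : Fin (s + d) => φ i u ≠ φ i v).card
  push_cast at hkr hne
  have e1 : (m : ℝ) * d ≥ (1 + δ) * (s + d) := by convert hkr using 1; ring
  have e2 : (n : ℝ) ≤ Real.exp ((Real.log (1 + δ) - δ / (1 + δ)) * d) := by
    convert hne using 3; ring
  set B : ℝ := ((m : ℝ) + δ) ^ (s + d) / (1 + δ) ^ d with hBdef
  have hB0 : 0 < B := by positivity
  have hnB : (n : ℝ) * B ≤ (m : ℝ) ^ (s + d) := by
    have a1 : ((m : ℝ) + δ) ^ (s + d) ≤ m ^ (s + d) * Real.exp (δ / (1 + δ) * d) := by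
      have : (m : ℝ) + δ ≤ m * Real.exp (δ / m) := by
        have := Real.add_one_le_exp (δ / m)
        calc (m : ℝ) + δ = m * (δ / m + 1) := by field_simp; ring
          _ ≤ _ := by gcongr
      calc ((m : ℝ) + δ) ^ (s + d) ≤ (m * Real.exp (δ / m)) ^ (s + d) := by gcongr
        _ = m ^ (s + d) * Real.exp ((s + d : ℕ) * (δ / m)) := by
            rw [mul_pow, Real.exp_nat_mul]
        _ ≤ _ := by
            refine mul_le_mul_of_nonneg_left (Real.exp_le_exp.2 ?_) (by positivity)
            push_cast
            rw [← mul_div_assoc, div_mul_eq_mul_div, div_le_div_iff₀ (by positivity) (by positivity)]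
            nlinarith
    have a2 : Real.exp ((Real.log (1 + δ) - δ / (1 + δ)) * d) * Real.exp (δ / (1 + δ) * d)
        = (1 + δ) ^ d := by
      rw [← Real.exp_add, sub_mul, sub_add_cancel, mul_comm, Real.exp_nat_mul,
        Real.exp_log (by positivity)]
    rw [hBdef, ← mul_div_assoc, div_le_iff₀ (by positivity), ← a2]
    calc _ ≤ Real.exp ((Real.log (1 + δ) - δ / (1 + δ)) * d) *
          (m ^ (s + d) * Real.exp (δ / (1 + δ) * d)) := by gcongr
      _ = _ := by ring
  obtain ⟨f, hf⟩ := greedy_aux (α := Fin (s + d) → Fin m)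
    (fun x y => d < (Finset.univ.filter fun i => x i = y i).card)
    (by intro x y h; simpa only [eq_comm] using h) B hB0.le
    (by
      intro x
      rw [hBdef, le_div_iff₀ (by positivity)]
      have := sum_pow_agree (s + d) m (1 + δ) x
      calc _ = ∑ y ∈ Finset.univ.filter (fun y : Fin (s + d) → Fin m =>
            d < (Finset.univ.filter fun i => x i = y i).card), (1 + δ) ^ d := by simp
        _ ≤ ∑ y ∈ Finset.univ.filter (fun y : Fin (s + d) → Fin m =>
            d < (Finset.univ.filter fun i => x i = y i).card),
              (1 + δ) ^ (Finset.univ.filter fun i => x i = y i).card := by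
            refine Finset.sum_le_sum fun y hy => ?_
            exact pow_le_pow_right₀ (by linarith) (Finset.mem_filter.1 hy).2.le
        _ ≤ ∑ y : Fin (s + d) → Fin m,
              (1 + δ) ^ (Finset.univ.filter fun i => x i = y i).card :=
            Finset.sum_le_sum_of_subset_of_nonneg (Finset.filter_subset _ _)
              (fun _ _ _ => by positivity)
        _ = _ := by rw [this]; ring) n
    (by
      simp only [Fintype.card_pi, Fintype.card_fin, Finset.prod_const, Finset.card_univ]
      push_cast
      linarith)
  refine ⟨fun i u => f u i, fun u v huv => ?_⟩
  have h1 := hf u v huv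
  have h2 := Finset.card_filter_add_card_filter_not (s := (Finset.univ : Finset (Fin (s + d))))
    (fun i => f u i = f v i)
  simp only [Finset.card_univ, Fintype.card_fin] at h2
  simp only [ne_eq]
  omega
end

section
/- Let m ≥ 1, a ≥ 1 and r ≥ 1 be integers and let 0 ≤ q ≤ a·r. The number of r-tuples (x^{(1)}, …, x^{(r)}) of sequences x^{(i)} : {1,…,a} → {1,…,m} such that |{(j, i) ∈ {1,…,a} × {1,…,r} : there exists j' < j with x^{(i)}(j') = x^{(i)}(j)}| ≥ q is at most C(a·r, q) · a^q · m^{a·r − q}, where C(a·r, q) denotes the binomial coefficient. -/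
theorem count_repeat_aux (m a r : ℕ) (T : Finset (Fin a × Fin r)) :
    (Finset.univ.filter fun x : Fin r → Fin a → Fin m =>
        ∀ t ∈ T, ∃ j' : Fin a, j' < t.1 ∧ x t.2 j' = x t.2 t.1).card
      ≤ a ^ T.card * m ^ (a * r - T.card) := by
  classical
  rw [← Fintype.card_subtype]
  have h : ∀ x : {x : Fin r → Fin a → Fin m //
      ∀ t ∈ T, ∃ j' : Fin a, j' < t.1 ∧ x t.2 j' = x t.2 t.1}, ∀ t : {t // t ∈ T},
      ∃ j' : Fin a, j' < t.1.1 ∧ x.1 t.1.2 j' = x.1 t.1.2 t.1.1 :=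
    fun x t => x.2 t.1 t.2
  choose g hg1 hg2 using h
  have hinj : Function.Injective (fun x => ((g x, fun t => x.1 t.1.2 t.1.1) :
      ({t // t ∈ T} → Fin a) × ({t // t ∉ T} → Fin m))) := by
    intro x y hxy
    simp only [Prod.mk.injEq] at hxy
    obtain ⟨h1, h2⟩ := hxy
    apply Subtype.ext
    funext i
    have key : ∀ n : ℕ, ∀ j : Fin a, j.val = n → x.1 i j = y.1 i j := by
      intro n
      induction n using Nat.strong_induction_on with
      | _ n ih =>
        intro j hj
        by_cases hT : (j, i) ∈ T
        · have e1 := hg2 x ⟨(j, i), hT⟩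
          have e2 := hg2 y ⟨(j, i), hT⟩
          have e3 := hg1 x ⟨(j, i), hT⟩
          rw [← h1] at e2
          simp only at e1 e2 e3
          rw [← e1, ← e2]
          exact ih _ (hj ▸ e3) _ rfl
        · exact congrFun h2 ⟨(j, i), hT⟩
    funext j
    exact key _ j rfl
  refine (Fintype.card_le_of_injective _ hinj).trans (le_of_eq ?_)
  rw [Fintype.card_prod, Fintype.card_fun, Fintype.card_fun, Fintype.card_subtype_compl]
  simp

theorem count_tuples_with_many_repeats (m a r q : ℕ)
    (hm : 1 ≤ m) (ha : 1 ≤ a) (hr : 1 ≤ r) (hq : q ≤ a * r) :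
    (Finset.univ.filter fun x : Fin r → Fin a → Fin m =>
        q ≤ (Finset.univ.filter fun ji : Fin a × Fin r =>
              ∃ j' : Fin a, j' < ji.1 ∧ x ji.2 j' = x ji.2 ji.1).card).card
      ≤ Nat.choose (a * r) q * a ^ q * m ^ (a * r - q) := by
  classical
  have hsub : (Finset.univ.filter fun x : Fin r → Fin a → Fin m =>
        q ≤ (Finset.univ.filter fun ji : Fin a × Fin r =>
              ∃ j' : Fin a, j' < ji.1 ∧ x ji.2 j' = x ji.2 ji.1).card) ⊆
      (Finset.powersetCard q (Finset.univ : Finset (Fin a × Fin r))).biUnion fun T =>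
        Finset.univ.filter fun x : Fin r → Fin a → Fin m =>
          ∀ t ∈ T, ∃ j' : Fin a, j' < t.1 ∧ x t.2 j' = x t.2 t.1 := by
    intro x hx
    obtain ⟨T, hT, hc⟩ := Finset.exists_subset_card_eq (Finset.mem_filter.1 hx).2
    refine Finset.mem_biUnion.2 ⟨T, Finset.mem_powersetCard.2 ⟨Finset.subset_univ _, hc⟩,
      Finset.mem_filter.2 ⟨Finset.mem_univ _, fun t ht => (Finset.mem_filter.1 (hT ht)).2⟩⟩
  refine (Finset.card_le_card hsub).trans ?_
  refine (Finset.card_biUnion_le_card_mul _ _ (a ^ q * m ^ (a * r - q)) ?_).trans (le_of_eq ?_)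
  · intro T hT
    have h := count_repeat_aux m a r T
    rw [(Finset.mem_powersetCard.1 hT).2] at h
    exact h
  · rw [Finset.card_powersetCard]
    simp [mul_assoc]
end
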